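/- Let z_1, …, z_N ∈ ℝ^d, let p ∈ M₁, let ε > 0, and for each i ∈ {1,…,N} let ℓ_i : ℝ^n → ℝ be any function. For q ∈ M₁ define W(p, q) as the infimum of Σ_{i,j} Π_{ij} ‖z_i − z_j‖ over matrices Π ∈ ℝ^{N×N} with Π_{ij} ≥ 0, Σ_j Π_{ij} = q_i for all i, and Σ_i Π_{ij} = p_j for all j, where ‖·‖ is the Euclidean norm on ℝ^d. Then inf_{θ ∈ ℝ^n} sup{ Σ_{i=1}^N q_i ℓ_i(θ) : q ∈ M₁, W(p, q) ≤ ε } = inf{ λ ε + Σ_{j=1}^N p_j s_j : θ ∈ ℝ^n, λ ≥ 0, s ∈ ℝ^N, and ℓ_i(θ) − λ ‖z_i − z_j‖ ≤ s_j for all i, j ∈ {1,…,N} }. -/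

import Mathlib

open scoped BigOperators

/-- Discrete Wasserstein distance between the distributions with weights `p` and `q`
supported on the points `z_1, …, z_N ∈ ℝ^d`, with Euclidean ground metric. -/
noncomputable def wassDist {N d : ℕ} (z : Fin N → EuclideanSpace ℝ (Fin d))
    (p q : Fin N → ℝ) : ℝ :=
  sInf {c : ℝ | ∃ Pi : Fin N → Fin N → ℝ,
    (∀ i j, 0 ≤ Pi i j) ∧ (∀ i, ∑ j, Pi i j = q i) ∧ (∀ j, ∑ i, Pi i j = p j) ∧
    c = ∑ i, ∑ j, Pi i j * ‖z i - z j‖}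

/-! The inequality from primal to dual integrates `a i ≤ l * c i j + s j` against a transport plan.
For the converse, the marginal `q` of a plan from `p` is free, so the inner supremum maximises one
linear functional of the plan (the gain) under a single further linear constraint (cost at most
`ε`). A cost strictly below `ε` is possible, so this constraint has a Lagrange multiplier `l`, and
gain minus `l` times cost is maximised by sending the mass at `j` to a maximiser over `i` of
`a i - l * c i j`; this maximum is the optimal `s j`. -/

section LagrangeMultiplier

variable {E : Type*} [AddCommMonoid E] [SMul ℝ E] {C : Set E} {f g : E → ℝ}

-- The convex combination of `x` and `y` with weights proportional to `-g y` and `g x` balances the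
-- values of `g`, so it is feasible.
lemma div_le_div_of_convexOn_of_concaveOn (hg : ConvexOn ℝ C g) (hf : ConcaveOn ℝ C f)
    (hfg : ∀ x ∈ C, g x ≤ 0 → f x ≤ 0) {x y : E} (hx : x ∈ C) (hy : y ∈ C)
    (hgx : 0 < g x) (hgy : g y < 0) : f x / g x ≤ f y / g y := by
  have hD : 0 < g x - g y := by linarith
  set α := -g y / (g x - g y)
  set β := g x / (g x - g y)
  have hα : 0 ≤ α := div_nonneg (by linarith) hD.le
  have hβ : 0 ≤ β := div_nonneg hgx.le hD.le
  have hαβ : α + β = 1 := by simp only [α, β]; field_simp; ring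
  have hcross : g (α • x + β • y) ≤ 0 := by
    refine (hg.2 hx hy hα hβ hαβ).trans_eq ?_
    simp only [α, β, smul_eq_mul]; ring
  have hgain : α * f x + β * f y ≤ 0 :=
    (hf.2 hx hy hα hβ hαβ).trans (hfg _ (hg.1 hx hy hα hβ hαβ) hcross)
  have hcleared : -g y * f x + g x * f y ≤ 0 := by
    have hcombine : α * f x + β * f y = (-g y * f x + g x * f y) / (g x - g y) := by
      simp only [α, β]; ring
    rwa [hcombine, div_le_iff₀ hD, zero_mul] at hgain
  rw [div_le_iff₀ hgx, div_mul_eq_mul_div, le_div_iff_of_neg hgy]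
  linarith

theorem exists_lagrange_multiplier (hg : ConvexOn ℝ C g) (hf : ConcaveOn ℝ C f)
    (hfg : ∀ x ∈ C, g x ≤ 0 → f x ≤ 0) (hslater : ∃ x ∈ C, g x < 0) :
    ∃ l : ℝ, 0 ≤ l ∧ ∀ x ∈ C, f x ≤ l * g x := by
  obtain ⟨x₀, hx₀, hgx₀⟩ := hslater
  obtain ⟨l, hlower, hupper⟩ := exists_between_of_forall_le
    (s := insert 0 ((fun x => f x / g x) '' {x ∈ C | 0 < g x}))
    (t := (fun x => f x / g x) '' {x ∈ C | g x < 0})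
    (Set.insert_nonempty _ _) ⟨_, x₀, ⟨hx₀, hgx₀⟩, rfl⟩ (by
      rintro _ (rfl | ⟨x, ⟨hx, hgx⟩, rfl⟩) _ ⟨y, ⟨hy, hgy⟩, rfl⟩
      · exact div_nonneg_of_nonpos (hfg y hy hgy.le) hgy.le
      · exact div_le_div_of_convexOn_of_concaveOn hg hf hfg hx hy hgx hgy)
  refine ⟨l, hlower (Set.mem_insert _ _), fun x hx => ?_⟩
  rcases lt_trichotomy (g x) 0 with hgx | hgx | hgx
  · exact (le_div_iff_of_neg hgx).1 (hupper ⟨x, ⟨hx, hgx⟩, rfl⟩)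
  · simpa only [hgx, mul_zero] using hfg x hx hgx.le
  · exact (div_le_iff₀ hgx).1 (hlower (Set.mem_insert_of_mem _ ⟨x, ⟨hx, hgx⟩, rfl⟩))

end LagrangeMultiplier

section Transport

variable {ι κ : Type*} [Fintype ι] {p : κ → ℝ}

/-- The plans transporting `p` to an unspecified target: the column sums are `p`. -/
def plansFrom (p : κ → ℝ) : Set (ι → κ → ℝ) :=
  {P | (∀ i j, 0 ≤ P i j) ∧ ∀ j, ∑ i, P i j = p j}

/-- The plan moving all the mass of `p` at `j` to `σ j`. -/
def mapPlan [DecidableEq ι] (p : κ → ℝ) (σ : κ → ι) : ι → κ → ℝ :=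
  fun i j => if i = σ j then p j else 0

lemma convex_plansFrom (p : κ → ℝ) : Convex ℝ (plansFrom p : Set (ι → κ → ℝ)) := by
  rintro P ⟨hP, hPp⟩ R ⟨hR, hRp⟩ α β hα hβ hαβ
  refine ⟨fun i j => add_nonneg (mul_nonneg hα (hP i j)) (mul_nonneg hβ (hR i j)), fun j => ?_⟩
  simp only [Pi.add_apply, Pi.smul_apply, smul_eq_mul, Finset.sum_add_distrib, ← Finset.mul_sum,
    hPp, hRp, ← add_mul, hαβ, one_mul]

lemma mapPlan_mem_plansFrom [DecidableEq ι] (hp : ∀ j, 0 ≤ p j) (σ : κ → ι) :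
    mapPlan p σ ∈ plansFrom p := by
  refine ⟨fun i j => ?_, fun j => by simp [mapPlan]⟩
  unfold mapPlan
  split_ifs
  exacts [hp j, le_rfl]

variable [Fintype κ] {c : ι → κ → ℝ} {q a : ι → ℝ} {s : κ → ℝ} {l ε : ℝ} {P : ι → κ → ℝ}

/-- The integral of a cost `c` against a plan `P`, as a bilinear form. Costs depending on one index
only give the integrals against the marginals of `P`. -/
def planCost : (ι → κ → ℝ) →ₗ[ℝ] (ι → κ → ℝ) →ₗ[ℝ] ℝ :=
  LinearMap.mk₂ ℝ (fun c P => ∑ i, ∑ j, P i j * c i j)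
    (fun c c' P => by simp only [Pi.add_apply, mul_add, Finset.sum_add_distrib])
    (fun r c P => by
      simp only [Pi.smul_apply, smul_eq_mul, Finset.mul_sum, mul_left_comm])
    (fun c P P' => by simp only [Pi.add_apply, add_mul, Finset.sum_add_distrib])
    (fun r c P => by simp only [Pi.smul_apply, smul_eq_mul, Finset.mul_sum, mul_assoc])

/-- The couplings of `p` and `q`, with `q` as row sums and `p` as column sums. -/
def transportPlans (p : κ → ℝ) (q : ι → ℝ) : Set (ι → κ → ℝ) :=
  {P ∈ plansFrom p | ∀ i, ∑ j, P i j = q i}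

/-- The optimal transport cost from `p` to `q`, which is `0` when they admit no coupling. -/
noncomputable def transportCost (c : ι → κ → ℝ) (p : κ → ℝ) (q : ι → ℝ) : ℝ :=
  sInf (planCost c '' transportPlans p q)

lemma planCost_apply (c P : ι → κ → ℝ) : planCost c P = ∑ i, ∑ j, P i j * c i j := rfl

lemma planCost_mono {c' : ι → κ → ℝ} (hc : ∀ i j, c i j ≤ c' i j) (hP : ∀ i j, 0 ≤ P i j) :
    planCost c P ≤ planCost c' P :=
  Finset.sum_le_sum fun i _ => Finset.sum_le_sum fun j _ =>
    mul_le_mul_of_nonneg_left (hc i j) (hP i j)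

lemma planCost_fst (hP : ∀ i, ∑ j, P i j = q i) (a : ι → ℝ) :
    planCost (fun i _ => a i) P = ∑ i, q i * a i := by
  simp only [planCost_apply, ← Finset.sum_mul, hP]

lemma planCost_snd (hP : ∀ j, ∑ i, P i j = p j) (s : κ → ℝ) :
    planCost (fun _ j => s j) P = ∑ j, p j * s j := by
  rw [planCost_apply, Finset.sum_comm]
  simp only [← Finset.sum_mul, hP]

lemma planCost_mapPlan [DecidableEq ι] (c : ι → κ → ℝ) (p : κ → ℝ) (σ : κ → ι) :
    planCost c (mapPlan p σ) = ∑ j, p j * c (σ j) j := by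
  rw [planCost_apply, Finset.sum_comm]
  simp only [mapPlan, ite_mul, zero_mul, Finset.sum_ite_eq',
    Finset.mem_univ, if_true]

lemma transportPlans_nonempty (hp : p ∈ stdSimplex ℝ κ) (hq : q ∈ stdSimplex ℝ ι) :
    (transportPlans p q).Nonempty :=
  ⟨fun i j => q i * p j, ⟨fun i j => mul_nonneg (hq.1 i) (hp.1 j),
    fun j => by rw [← Finset.sum_mul, hq.2, one_mul]⟩,
    fun i => by rw [← Finset.mul_sum, hp.2, mul_one]⟩

lemma marginal_mem_stdSimplex (hp : p ∈ stdSimplex ℝ κ) (hP : P ∈ plansFrom p) :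
    (fun i => ∑ j, P i j) ∈ stdSimplex ℝ ι :=
  ⟨fun i => Finset.sum_nonneg fun j _ => hP.1 i j, by
    rw [Finset.sum_comm]; simpa only [hP.2] using hp.2⟩

lemma bddBelow_image_planCost (c : ι → κ → ℝ) (p : κ → ℝ) (q : ι → ℝ) :
    BddBelow (planCost c '' transportPlans p q) := by
  refine ⟨∑ i, ∑ j, -(p j * |c i j|), ?_⟩
  rintro _ ⟨P, ⟨⟨hP, hPp⟩, -⟩, rfl⟩
  refine Finset.sum_le_sum fun i _ => Finset.sum_le_sum fun j _ => ?_
  have hPle : P i j ≤ p j :=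
    hPp j ▸ Finset.single_le_sum (fun k _ => hP k j) (Finset.mem_univ i)
  calc -(p j * |c i j|) ≤ -(P i j * |c i j|) :=
        neg_le_neg (mul_le_mul_of_nonneg_right hPle (abs_nonneg _))
    _ = P i j * -|c i j| := (mul_neg _ _).symm
    _ ≤ P i j * c i j := mul_le_mul_of_nonneg_left (neg_abs_le _) (hP i j)

lemma transportCost_le_planCost (hP : P ∈ transportPlans p q) :
    transportCost c p q ≤ planCost c P :=
  csInf_le (bddBelow_image_planCost c p q) ⟨P, hP, rfl⟩

lemma transportCost_self_le {p : ι → ℝ} (c : ι → ι → ℝ) (hp : ∀ i, 0 ≤ p i) :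
    transportCost c p p ≤ ∑ i, p i * c i i := by
  classical
  have hid : mapPlan p id ∈ transportPlans p p :=
    ⟨mapPlan_mem_plansFrom hp id, fun i => by simp [mapPlan]⟩
  exact (transportCost_le_planCost hid).trans_eq (planCost_mapPlan c p id)

lemma sum_mul_le_mul_planCost_add (hP : P ∈ transportPlans p q)
    (hs : ∀ i j, a i - l * c i j ≤ s j) :
    ∑ i, q i * a i ≤ l * planCost c P + ∑ j, p j * s j :=
  calc ∑ i, q i * a i = planCost (fun i _ => a i) P := (planCost_fst hP.2 a).symm
    _ ≤ planCost (l • c + fun _ j => s j) P :=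
      planCost_mono (fun i j => sub_le_iff_le_add'.1 (hs i j)) hP.1.1
    _ = l * planCost c P + ∑ j, p j * s j := by
      rw [map_add, map_smul, LinearMap.add_apply, LinearMap.smul_apply, smul_eq_mul,
        planCost_snd hP.1.2]

theorem sum_mul_le_mul_transportCost_add (hp : p ∈ stdSimplex ℝ κ) (hq : q ∈ stdSimplex ℝ ι)
    (hl : 0 ≤ l) (hs : ∀ i j, a i - l * c i j ≤ s j) :
    ∑ i, q i * a i ≤ l * transportCost c p q + ∑ j, p j * s j := by
  rw [← sub_le_iff_le_add, transportCost, ← smul_eq_mul, ← Real.sInf_smul_of_nonneg hl]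
  refine le_csInf ((transportPlans_nonempty hp hq).image _).smul_set ?_
  rintro _ ⟨_, ⟨P, hP, rfl⟩, rfl⟩
  exact sub_le_iff_le_add.2 (sum_mul_le_mul_planCost_add hP hs)

lemma exists_multiplier_planCost (hp : p ∈ stdSimplex ℝ κ)
    (hε : ∃ q ∈ stdSimplex ℝ ι, transportCost c p q < ε) {V : ℝ}
    (hV : ∀ q ∈ stdSimplex ℝ ι, transportCost c p q ≤ ε → ∑ i, q i * a i ≤ V) :
    ∃ l : ℝ, 0 ≤ l ∧ ∀ P ∈ plansFrom p,
      planCost (fun i _ => a i) P - V ≤ l * (planCost c P - ε) := by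
  have hconvex : Convex ℝ (plansFrom p : Set (ι → κ → ℝ)) := convex_plansFrom p
  refine exists_lagrange_multiplier
    (((planCost c).convexOn hconvex).sub (concaveOn_const ε hconvex))
    (((planCost fun i _ => a i).concaveOn hconvex).sub (convexOn_const V hconvex)) ?_ ?_
  · intro P hP hcost
    rw [sub_nonpos] at hcost ⊢
    rw [planCost_fst (fun _ => rfl)]
    exact hV _ (marginal_mem_stdSimplex hp hP)
      ((transportCost_le_planCost ⟨hP, fun _ => rfl⟩).trans hcost)
  · obtain ⟨q, hq, hqε⟩ := hε
    obtain ⟨_, ⟨P, hP, rfl⟩, hPε⟩ :=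
      exists_lt_of_csInf_lt ((transportPlans_nonempty hp hq).image _) hqε
    exact ⟨P, hP.1, sub_neg.2 hPε⟩

theorem exists_dual_le (hp : p ∈ stdSimplex ℝ κ)
    (hε : ∃ q ∈ stdSimplex ℝ ι, transportCost c p q < ε) {V : ℝ}
    (hV : ∀ q ∈ stdSimplex ℝ ι, transportCost c p q ≤ ε → ∑ i, q i * a i ≤ V) :
    ∃ l : ℝ, 0 ≤ l ∧ ∃ s : κ → ℝ, (∀ i j, a i - l * c i j ≤ s j) ∧
      l * ε + ∑ j, p j * s j ≤ V := by
  classical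
  obtain ⟨l, hl, hmul⟩ := exists_multiplier_planCost hp hε hV
  have : Nonempty ι := by
    obtain ⟨q, hq, -⟩ := hε
    by_contra hempty
    rw [not_nonempty_iff] at hempty
    simp [stdSimplex_of_isEmpty_index] at hq
  choose σ hσ using fun j => Finite.exists_max fun i => a i - l * c i j
  refine ⟨l, hl, fun j => a (σ j) - l * c (σ j) j, fun i j => hσ j i, ?_⟩
  have hvalue : ∑ j, p j * (a (σ j) - l * c (σ j) j) =
      planCost (fun i _ => a i) (mapPlan p σ) - l * planCost c (mapPlan p σ) := by
    simp only [planCost_mapPlan, Finset.mul_sum, ← Finset.sum_sub_distrib, mul_sub, mul_left_comm]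
  linarith [hmul _ (mapPlan_mem_plansFrom hp.1 σ)]

theorem iSup_transportCost_le_eq_iInf_dual (hp : p ∈ stdSimplex ℝ κ)
    (hε : ∃ q ∈ stdSimplex ℝ ι, transportCost c p q < ε) (a : ι → ℝ) :
    (⨆ q ∈ {q ∈ stdSimplex ℝ ι | transportCost c p q ≤ ε}, ((∑ i, q i * a i : ℝ) : EReal))
      = ⨅ l ∈ Set.Ici (0 : ℝ), ⨅ s ∈ {s : κ → ℝ | ∀ i j, a i - l * c i j ≤ s j},
          ((l * ε + ∑ j, p j * s j : ℝ) : EReal) := by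
  apply le_antisymm
  · refine le_iInf₂ fun l hl => le_iInf₂ fun s hs => iSup₂_le fun q ⟨hq, hqε⟩ => ?_
    exact EReal.coe_le_coe_iff.2 <| (sum_mul_le_mul_transportCost_add hp hq hl hs).trans <|
      add_le_add_left (mul_le_mul_of_nonneg_left hqε hl) _
  · refine EReal.le_of_forall_lt_iff_le.1 fun V hV => ?_
    obtain ⟨l, hl, s, hs, hle⟩ := exists_dual_le hp hε fun q hq hqε =>
      EReal.coe_le_coe_iff.1 (iSup₂_le_iff.1 hV.le q ⟨hq, hqε⟩)
    exact iInf₂_le_of_le l hl <| iInf₂_le_of_le s hs <| EReal.coe_le_coe_iff.2 hle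

theorem stmt_18_general {Θ : Type*} (c : ι → κ → ℝ) (hp : p ∈ stdSimplex ℝ κ)
    (hε : ∃ q ∈ stdSimplex ℝ ι, transportCost c p q < ε) (ℓ : ι → Θ → ℝ) :
    (⨅ θ : Θ, ⨆ q ∈ {q ∈ stdSimplex ℝ ι | transportCost c p q ≤ ε},
        ((∑ i, q i * ℓ i θ : ℝ) : EReal))
      = ⨅ θ : Θ, ⨅ l ∈ Set.Ici (0 : ℝ),
          ⨅ s ∈ {s : κ → ℝ | ∀ i j, ℓ i θ - l * c i j ≤ s j},
            ((l * ε + ∑ j, p j * s j : ℝ) : EReal) :=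
  iInf_congr fun θ => iSup_transportCost_le_eq_iInf_dual hp hε fun i => ℓ i θ

end Transport

lemma wassDist_eq_transportCost {N d : ℕ} (z : Fin N → EuclideanSpace ℝ (Fin d))
    (p q : Fin N → ℝ) : wassDist z p q = transportCost (fun i j => ‖z i - z j‖) p q := by
  refine congrArg sInf (Set.ext fun r => ⟨?_, ?_⟩)
  · rintro ⟨P, hP, hPq, hPp, rfl⟩
    exact ⟨P, ⟨⟨hP, hPp⟩, hPq⟩, rfl⟩
  · rintro ⟨P, ⟨⟨hP, hPp⟩, hPq⟩, rfl⟩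
    exact ⟨P, hP, hPq, hPp, rfl⟩

lemma wassDist_self_le_zero {N d : ℕ} (z : Fin N → EuclideanSpace ℝ (Fin d)) {p : Fin N → ℝ}
    (hp : ∀ i, 0 ≤ p i) : wassDist z p p ≤ 0 := by
  simpa only [wassDist_eq_transportCost, sub_self, norm_zero, mul_zero, Finset.sum_const_zero]
    using transportCost_self_le (fun i j => ‖z i - z j‖) hp

/-- for points `z_1, …, z_N ∈ ℝ^d`, `p ∈ M₁`, `ε > 0` and arbitrary loss
functions `ℓ_i : ℝ^n → ℝ`:
`inf_θ sup {Σ_i q_i ℓ_i(θ) : q ∈ M₁, W(p,q) ≤ ε}` equals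
`inf {λε + Σ_j p_j s_j : θ ∈ ℝ^n, λ ≥ 0, s ∈ ℝ^N, ℓ_i(θ) − λ‖z_i − z_j‖ ≤ s_j ∀ i,j}`,
both infima taken in `ℝ ∪ {±∞}` (i.e. `EReal`). -/
theorem stmt_18 {N n d : ℕ} (hN : 1 ≤ N) (hn : 1 ≤ n) (hd : 1 ≤ d)
    (z : Fin N → EuclideanSpace ℝ (Fin d))
    (p : Fin N → ℝ) (hp : p ∈ stdSimplex ℝ (Fin N))
    (ε : ℝ) (hε : 0 < ε)
    (ℓ : Fin N → (Fin n → ℝ) → ℝ) :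
    (⨅ θ : Fin n → ℝ,
        ⨆ q ∈ {q ∈ stdSimplex ℝ (Fin N) | wassDist z p q ≤ ε},
          (((∑ i, q i * ℓ i θ : ℝ)) : EReal))
      = ⨅ θ : Fin n → ℝ, ⨅ l ∈ Set.Ici (0 : ℝ),
          ⨅ s ∈ {s : Fin N → ℝ | ∀ i j, ℓ i θ - l * ‖z i - z j‖ ≤ s j},
            (((l * ε + ∑ j, p j * s j : ℝ)) : EReal) := by
  have hslater := (wassDist_self_le_zero z hp.1).trans_lt hε
  simp only [wassDist_eq_transportCost] at hslater ⊢
  exact stmt_18_general _ hp ⟨p, hp, hslater⟩ ℓ
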